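/- Let t_l < t_r in T. Every Nash equilibrium (x_l*, x_r*) ∈ E(t_l,t_r) satisfies t_l ≤ x_l* < x_r* ≤ t_r (partial convergence). -/

import Mathlib

/-!
The two candidates enter the payoff symmetrically, since `P xl xr + P xr xl = 1`, so their best
responses are governed by one fact: a best response to `x` lies between the candidate's ideal
policy `t` and `x`, and differs from `x` unless `x = t` (`lt_of_brL_of_lt`, `lt_of_brL_of_gt`,
`eq_of_brL_self`). Indeed, a platform beyond `x` as seen from `t` is worse than matching `x`.
Matching `x` is worse than proposing `t`, which by full support wins with positive probability.
From a platform beyond `t` as seen from `x`, moving to `t` improves the policy without lowering the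
probability of winning. Applying this fact to both candidates leaves `t_l ≤ x_l < x_r ≤ t_r` as the
only possible order.
-/

open Set

/-- The policy space `T = [0,1] ⊆ ℝ`. -/
def T : Set ℝ := Set.Icc 0 1

/-- Hypotheses on the beliefs `F` about the median voter's ideal policy:
continuous, strictly increasing on `T`, with values in `[0,1]` (full support). -/
def Fhyp (F : ℝ → ℝ) : Prop :=
  ContinuousOn F T ∧ StrictMonoOn F T ∧ ∀ x ∈ T, 0 ≤ F x ∧ F x ≤ 1

/-- The probability that candidate `l` wins given platforms `xl, xr`. -/
noncomputable def P (F : ℝ → ℝ) (xl xr : ℝ) : ℝ :=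
  if xl < xr then F ((xl + xr) / 2)
  else if xl = xr then 1 / 2
  else 1 - F ((xl + xr) / 2)

/-- Hypotheses on the payoff `u x t`: jointly continuous on `T × T`, strictly
concave in the platform, and uniquely maximized at the ideal policy. -/
def uhyp (u : ℝ → ℝ → ℝ) : Prop :=
  ContinuousOn (fun p : ℝ × ℝ => u p.1 p.2) (T ×ˢ T) ∧
  (∀ t ∈ T, StrictConcaveOn ℝ T (fun x => u x t)) ∧
  (∀ t ∈ T, ∀ x ∈ T, x ≠ t → u x t < u t t)

/-- Expected payoff of a candidate with ideal policy `t` given platforms `xl, xr`. -/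
noncomputable def U (F : ℝ → ℝ) (u : ℝ → ℝ → ℝ) (t xl xr : ℝ) : ℝ :=
  P F xl xr * u xl t + (1 - P F xl xr) * u xr t

/-- Best-response set of candidate `l` with ideal policy `t` to opponent platform `x`. -/
def brL (F : ℝ → ℝ) (u : ℝ → ℝ → ℝ) (t x : ℝ) : Set ℝ :=
  {y ∈ T | ∀ z ∈ T, U F u t z x ≤ U F u t y x}

/-- Best-response set of candidate `r` with ideal policy `t` to opponent platform `x`. -/
def brR (F : ℝ → ℝ) (u : ℝ → ℝ → ℝ) (t x : ℝ) : Set ℝ :=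
  {y ∈ T | ∀ z ∈ T, U F u t x z ≤ U F u t x y}

/-- The set of Nash equilibria given ideal policies `tl, tr`
(ordered coordinatewise via the product order on `ℝ × ℝ`). -/
def E (F : ℝ → ℝ) (u : ℝ → ℝ → ℝ) (tl tr : ℝ) : Set (ℝ × ℝ) :=
  {p | p.1 ∈ brL F u tl p.2 ∧ p.2 ∈ brR F u tr p.1}

/-- Strict single crossing property (SSCP). -/
def SSCP (F : ℝ → ℝ) (u : ℝ → ℝ → ℝ) : Prop :=
  ∀ t x x' y y' t' : ℝ, t ∈ T → x ∈ T → x' ∈ T → y ∈ T → y' ∈ T → t' ∈ T →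
    t ≤ x → x < x' → x' < y → y < y' → y' ≤ t' →
    (U F u t x' y ≥ U F u t x y → U F u t x' y' > U F u t x y') ∧
    (U F u t' x' y ≥ U F u t' x' y' → U F u t' x y > U F u t' x y')

/-- Strict log supermodularity (SLS). -/
def SLS (u : ℝ → ℝ → ℝ) : Prop :=
  ∀ t t' x x' y : ℝ, t ∈ T → t' ∈ T → x ∈ T → x' ∈ T → y ∈ T →
    ((t < t' ∧ t' ≤ x ∧ x < x' ∧ x' < y) ∨ (y < x ∧ x < x' ∧ x' ≤ t ∧ t < t')) →
    (u x' t' - u y t') / (u x t' - u y t') > (u x' t - u y t) / (u x t - u y t)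

/-- The expected policy function. -/
noncomputable def pol (F : ℝ → ℝ) (xl xr : ℝ) : ℝ :=
  P F xl xr * xl + (1 - P F xl xr) * xr

/-- Strict concavity with peak `t` makes `u · t` strictly decreasing to the right of `t`. -/
lemma u_lt_of_le_of_lt {u : ℝ → ℝ → ℝ} (hu : uhyp u) {t x y : ℝ} (ht : t ∈ T) (hy : y ∈ T)
    (htx : t ≤ x) (hxy : x < y) : u y t < u x t := by
  have hpeak := hu.2.2 t ht y hy (by linarith : t < y).ne'
  rcases htx.eq_or_lt with rfl | htx
  · exact hpeak
  · exact ((hu.2.1 t ht).lt_on_openSegment ht hy (htx.trans hxy).ne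
      (by rw [openSegment_eq_Ioo (htx.trans hxy)]; exact ⟨htx, hxy⟩)).trans_le'
      (by simp [hpeak.le])

/-- Strict concavity with peak `t` makes `u · t` strictly increasing to the left of `t`. -/
lemma u_lt_of_lt_of_le {u : ℝ → ℝ → ℝ} (hu : uhyp u) {t x y : ℝ} (ht : t ∈ T) (hx : x ∈ T)
    (hxy : x < y) (hyt : y ≤ t) : u x t < u y t := by
  have hpeak := hu.2.2 t ht x hx (by linarith : x < t).ne
  rcases hyt.eq_or_lt with rfl | hyt
  · exact hpeak
  · exact ((hu.2.1 t ht).lt_on_openSegment hx ht (hxy.trans hyt).ne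
      (by rw [openSegment_eq_Ioo (hxy.trans hyt)]; exact ⟨hxy, hyt⟩)).trans_le'
      (by simp [hpeak.le])

lemma U_self (F : ℝ → ℝ) (u : ℝ → ℝ → ℝ) (t x : ℝ) : U F u t x x = u x t := by
  unfold U; ring

lemma U_comm (F : ℝ → ℝ) (u : ℝ → ℝ → ℝ) (t x y : ℝ) : U F u t x y = U F u t y x := by
  have hP : P F x y = 1 - P F y x := by
    rcases lt_trichotomy x y with h | rfl | h
    · simp [P, h, h.not_gt, h.ne', add_comm y x]
    · norm_num [P]
    · simp [P, h, h.not_gt, h.ne', add_comm y x]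
  unfold U
  rw [hP]
  ring

lemma brR_eq_brL (F : ℝ → ℝ) (u : ℝ → ℝ → ℝ) (t x : ℝ) : brR F u t x = brL F u t x := by
  simp only [brR, brL, U_comm F u t x]

lemma P_pos {F : ℝ → ℝ} (hF : Fhyp F) {x y : ℝ} (hx : x ∈ T) (hy : y ∈ T) : 0 < P F x y := by
  obtain ⟨-, hmono, hF01⟩ := hF
  have h0 : (0 : ℝ) ∈ T := ⟨le_rfl, zero_le_one⟩
  have h1 : (1 : ℝ) ∈ T := ⟨zero_le_one, le_rfl⟩
  have hm : (x + y) / 2 ∈ T := ⟨by linarith [hx.1, hy.1], by linarith [hx.2, hy.2]⟩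
  rcases lt_trichotomy x y with h | rfl | h
  · have := hmono h0 hm (by linarith [hx.1])
    simp only [P, h, if_true]
    linarith [(hF01 0 h0).1]
  · norm_num [P]
  · have := hmono hm h1 (by linarith [hx.2])
    simp only [P, h.not_gt, h.ne', if_false]
    linarith [(hF01 1 h1).2]

/-- On either side of the opponent `y`, moving closer to `y` does not lower the probability of
winning. -/
lemma P_le_P {F : ℝ → ℝ} (hF : Fhyp F) {x x' y : ℝ} (hx : x ∈ T) (hx' : x' ∈ T) (hy : y ∈ T)
    (h : x < x' ∧ x' < y ∨ y < x' ∧ x' < x) : P F x y ≤ P F x' y := by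
  have hm : (x + y) / 2 ∈ T := ⟨by linarith [hx.1, hy.1], by linarith [hx.2, hy.2]⟩
  have hm' : (x' + y) / 2 ∈ T := ⟨by linarith [hx'.1, hy.1], by linarith [hx'.2, hy.2]⟩
  rcases h with ⟨h, h'⟩ | ⟨h', h⟩
  · have := hF.2.1.monotoneOn hm hm' (by linarith)
    simpa only [P, h.trans h', h', if_true] using this
  · have := hF.2.1.monotoneOn hm' hm (by linarith)
    simp only [P, (h'.trans h).not_gt, (h'.trans h).ne', h'.not_gt, h'.ne', if_false]
    linarith

/-- A deviation to the better policy `x'` that does not lower the probability of winning pays off,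
provided winning with `x` is no worse than losing to `y`. -/
lemma U_lt_U {F : ℝ → ℝ} (hF : Fhyp F) {u : ℝ → ℝ → ℝ} {t x x' y : ℝ} (hx : x ∈ T) (hy : y ∈ T)
    (hP : P F x y ≤ P F x' y) (hxx' : u x t < u x' t) (hyx : u y t ≤ u x t) :
    U F u t x y < U F u t x' y := by
  unfold U
  nlinarith [mul_pos (P_pos hF hx hy) (sub_pos.2 hxx'),
    mul_nonneg (sub_nonneg.2 hP) (sub_nonneg.2 (hyx.trans hxx'.le))]

/-- Matching the opponent is always possible, so a best response is at least as good a policy as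
the opponent's. -/
lemma u_le_of_brL {F : ℝ → ℝ} (hF : Fhyp F) {u : ℝ → ℝ → ℝ} {t x y : ℝ} (hx : x ∈ T)
    (hy : y ∈ brL F u t x) : u x t ≤ u y t := by
  have h := hy.2 x hx
  rw [U_self] at h
  unfold U at h
  have hpos := P_pos hF hy.1 hx
  by_contra! hlt
  nlinarith [mul_pos hpos (sub_pos.2 hlt)]

/-- A candidate whose ideal policy differs from the opponent's platform does not match it. -/
lemma ne_of_brL {F : ℝ → ℝ} (hF : Fhyp F) {u : ℝ → ℝ → ℝ} (hu : uhyp u) {t x y : ℝ}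
    (ht : t ∈ T) (hx : x ∈ T) (hy : y ∈ brL F u t x) (hxt : x ≠ t) : y ≠ x := by
  rintro rfl
  have h := hy.2 t ht
  rw [U_self] at h
  unfold U at h
  nlinarith [mul_pos (P_pos hF ht hx) (sub_pos.2 (hu.2.2 t ht y hx hxt))]

lemma lt_of_brL_of_lt {F : ℝ → ℝ} (hF : Fhyp F) {u : ℝ → ℝ → ℝ} (hu : uhyp u) {t x y : ℝ}
    (ht : t ∈ T) (hx : x ∈ T) (hy : y ∈ brL F u t x) (htx : t < x) : t ≤ y ∧ y < x := by
  have hle := u_le_of_brL hF hx hy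
  have hyx : y < x := by
    refine (ne_of_brL hF hu ht hx hy htx.ne').lt_or_gt.resolve_right fun h => ?_
    exact hle.not_gt (u_lt_of_le_of_lt hu ht hy.1 htx.le h)
  refine ⟨?_, hyx⟩
  by_contra! h
  exact (hy.2 t ht).not_gt (U_lt_U hF hy.1 hx (P_le_P hF hy.1 ht hx (.inl ⟨h, htx⟩))
    (hu.2.2 t ht y hy.1 h.ne) hle)

lemma lt_of_brL_of_gt {F : ℝ → ℝ} (hF : Fhyp F) {u : ℝ → ℝ → ℝ} (hu : uhyp u) {t x y : ℝ}
    (ht : t ∈ T) (hx : x ∈ T) (hy : y ∈ brL F u t x) (hxt : x < t) : x < y ∧ y ≤ t := by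
  have hle := u_le_of_brL hF hx hy
  have hxy : x < y := by
    refine (ne_of_brL hF hu ht hx hy hxt.ne).lt_or_gt.resolve_left fun h => ?_
    exact hle.not_gt (u_lt_of_lt_of_le hu ht hy.1 h hxt.le)
  refine ⟨hxy, ?_⟩
  by_contra! h
  exact (hy.2 t ht).not_gt (U_lt_U hF hy.1 hx (P_le_P hF hy.1 ht hx (.inr ⟨hxt, h⟩))
    (hu.2.2 t ht y hy.1 h.ne') hle)

lemma eq_of_brL_self {F : ℝ → ℝ} (hF : Fhyp F) {u : ℝ → ℝ → ℝ} (hu : uhyp u) {t y : ℝ}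
    (ht : t ∈ T) (hy : y ∈ brL F u t t) : y = t := by
  by_contra h
  exact (u_le_of_brL hF ht hy).not_gt (hu.2.2 t ht y hy.1 h)

/-- Partial convergence: every Nash equilibrium `(x_l*, x_r*)` satisfies
`t_l ≤ x_l* < x_r* ≤ t_r`. -/
theorem partial_convergence (F : ℝ → ℝ) (u : ℝ → ℝ → ℝ)
    (hF : Fhyp F) (hu : uhyp u)
    (tl tr : ℝ) (htl : tl ∈ T) (htr : tr ∈ T) (hlt : tl < tr) :
    ∀ p ∈ E F u tl tr, tl ≤ p.1 ∧ p.1 < p.2 ∧ p.2 ≤ tr := by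
  rintro ⟨a, b⟩ ⟨ha, hb⟩
  rw [brR_eq_brL] at hb
  simp only at ha hb ⊢
  rcases lt_trichotomy tl b with h | rfl | h
  · obtain ⟨h1, h2⟩ := lt_of_brL_of_lt hF hu htl hb.1 ha h
    refine ⟨h1, h2, ?_⟩
    rcases lt_trichotomy tr a with h' | rfl | h'
    · linarith [(lt_of_brL_of_lt hF hu htr ha.1 hb h').2]
    · linarith [eq_of_brL_self hF hu htr hb]
    · exact (lt_of_brL_of_gt hF hu htr ha.1 hb h').2
  -- Here `a = b = t_l < t_r`, but the right candidate would not match `a`.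
  · have h1 := eq_of_brL_self hF hu htl ha
    linarith [(lt_of_brL_of_gt hF hu htr ha.1 hb (by linarith)).1]
  -- Here `b < a ≤ t_l < t_r`, so the right candidate would rather be to the right of `a`.
  · obtain ⟨h1, h2⟩ := lt_of_brL_of_gt hF hu htl hb.1 ha h
    linarith [(lt_of_brL_of_gt hF hu htr ha.1 hb (by linarith)).1]
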